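/- For all constants c > 0, ε > 0 and all (x,H) ∈ ℝ², the observer gain condition p₁ := −D ε ∂q/∂y (x,H) − D ∂²ψ/∂x² (x,H) − c ψ(x,H) evaluates to the explicit formula p₁ = (cλ/β) x Φ₁(x,H) + λ² x ( ε H/D − 3/β ) Φ₂(x,H) + (λ³/(Dβ)) x³ Φ₃(x,H). -/

import Mathlib

/-- `Φ_j(x,y) = 2^{-j} ∑_{m=0}^∞ ((λ/(4D))(y² − x²))^m / (m! (m+j)!)`,
which equals `I_j(z)/z^j` with `z = √((λ/D)(y² − x²))`. -/
noncomputable def Phi (D lam : ℝ) (j : ℕ) (x y : ℝ) : ℝ :=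
  (1 / 2 ^ j) *
    ∑' m : ℕ, (lam / (4 * D) * (y ^ 2 - x ^ 2)) ^ m / (m.factorial * (m + j).factorial : ℝ)

/-- The direct backstepping kernel `q(x,y) = −(λ/D) x Φ₁(x,y)`. -/
noncomputable def qker (D lam : ℝ) (x y : ℝ) : ℝ :=
  -(lam / D) * x * Phi D lam 1 x y

/-- `ψ(x,H) = (D/β) q(x,H)`. -/
noncomputable def psiK (D lam beta : ℝ) (x H : ℝ) : ℝ :=
  D / beta * qker D lam x H

noncomputable def FF (j : ℕ) (u : ℝ) : ℝ :=
  ∑' m : ℕ, u ^ m / (m.factorial * (m + j).factorial : ℝ)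

lemma FF_summable (j : ℕ) (u : ℝ) :
    Summable (fun m : ℕ => u ^ m / (m.factorial * (m + j).factorial : ℝ)) := by
  refine Summable.of_norm_bounded (g := fun m : ℕ => |u| ^ m / (m.factorial : ℝ))
    (Real.summable_pow_div_factorial |u|) ?_
  intro m
  have h1 : (1 : ℝ) ≤ ((m + j).factorial : ℝ) := by exact_mod_cast Nat.factorial_pos _
  have h2 : (0 : ℝ) < (m.factorial : ℝ) := by exact_mod_cast Nat.factorial_pos _
  rw [Real.norm_eq_abs, abs_div, abs_pow, abs_of_pos (by positivity :
    (0 : ℝ) < m.factorial * (m + j).factorial)]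
  apply div_le_div_of_nonneg_left (by positivity) h2
  nlinarith

lemma FF_term (j m : ℕ) (u : ℝ) :
    (((m + 1 : ℕ) : ℝ) * u ^ (m + 1 - 1)) / (((m + 1).factorial : ℝ) * (m + 1 + j).factorial)
      = u ^ m / (m.factorial * (m + (j + 1)).factorial : ℝ) := by
  have h : m + 1 + j = m + (j + 1) := by ring
  rw [h, Nat.factorial_succ]
  have h2 : (m.factorial : ℝ) ≠ 0 := by exact_mod_cast Nat.factorial_ne_zero _
  have h3 : ((m + (j + 1)).factorial : ℝ) ≠ 0 := by exact_mod_cast Nat.factorial_ne_zero _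
  have h4 : ((m : ℝ) + 1) ≠ 0 := by positivity
  push_cast
  field_simp

lemma FF_deriv (j : ℕ) (u : ℝ) : HasDerivAt (FF j) (FF (j + 1) u) u := by
  have key := hasDerivAt_tsum_of_isPreconnected
    (g := fun (m : ℕ) (v : ℝ) => v ^ m / (m.factorial * (m + j).factorial : ℝ))
    (g' := fun (m : ℕ) (v : ℝ) => ((m : ℝ) * v ^ (m - 1)) / (m.factorial * (m + j).factorial : ℝ))
    (u := fun m : ℕ => ((m : ℝ) * (|u| + 1) ^ (m - 1)) / (m.factorial * (m + j).factorial : ℝ))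
    (t := Metric.ball (0 : ℝ) (|u| + 1)) (y₀ := 0) (y := u) ?_ Metric.isOpen_ball
    (convex_ball _ _).isPreconnected ?_ ?_ (by simp; positivity) (FF_summable j 0) (by simp)
  · refine key.congr_deriv ?_
    have hs : Summable (fun m : ℕ => ((m : ℝ) * u ^ (m - 1)) /
        (m.factorial * (m + j).factorial : ℝ)) := by
      rw [← summable_nat_add_iff 1]
      simp only [FF_term]
      exact FF_summable (j + 1) u
    rw [hs.tsum_eq_zero_add]
    simp only [FF_term]
    simp [FF]
  · rw [← summable_nat_add_iff 1]
    simp only [FF_term]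
    exact FF_summable (j + 1) _
  · intro m v _
    exact (hasDerivAt_pow m v).div_const _
  · intro m v hv
    have hv' : |v| ≤ |u| + 1 := by
      have := Metric.mem_ball.1 hv
      rw [Real.dist_eq, sub_zero] at this
      exact this.le
    rw [Real.norm_eq_abs, abs_div, abs_mul, abs_pow, Nat.abs_cast, abs_of_pos (by positivity :
      (0 : ℝ) < m.factorial * (m + j).factorial)]
    gcongr

lemma Phi_eq (D lam : ℝ) (j : ℕ) (x y : ℝ) :
    Phi D lam j x y = (1 / 2 ^ j) * FF j (lam / (4 * D) * (y ^ 2 - x ^ 2)) := rfl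

lemma Phi_dy (D lam : ℝ) (j : ℕ) (x y : ℝ) :
    HasDerivAt (fun y => Phi D lam j x y) (lam / D * y * Phi D lam (j + 1) x y) y := by
  simp only [Phi_eq]
  have h1 : HasDerivAt (fun y : ℝ => lam / (4 * D) * (y ^ 2 - x ^ 2))
      (lam / (4 * D) * (2 * y)) y := by
    simpa using ((hasDerivAt_pow 2 y).sub_const (x ^ 2)).const_mul (lam / (4 * D))
  have := ((FF_deriv j _).comp y h1).const_mul (1 / 2 ^ j : ℝ)
  refine this.congr_deriv ?_
  rw [pow_succ]
  field_simp
  try ring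

lemma Phi_dx (D lam : ℝ) (j : ℕ) (x y : ℝ) :
    HasDerivAt (fun x => Phi D lam j x y) (-(lam / D * x * Phi D lam (j + 1) x y)) x := by
  simp only [Phi_eq]
  have h1 : HasDerivAt (fun x : ℝ => lam / (4 * D) * (y ^ 2 - x ^ 2))
      (lam / (4 * D) * (-(2 * x))) x := by
    simpa using ((hasDerivAt_pow 2 x).const_sub (y ^ 2)).const_mul (lam / (4 * D))
  have := ((FF_deriv j _).comp x h1).const_mul (1 / 2 ^ j : ℝ)
  refine this.congr_deriv ?_
  rw [pow_succ]
  field_simp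
  try ring

/-- The observer gain condition
`p₁ = −D ε q_y(x,H) − D ψ_xx(x,H) − c ψ(x,H)` evaluates to the explicit formula
`p₁ = (cλ/β) x Φ₁(x,H) + λ² x (ε H/D − 3/β) Φ₂(x,H) + (λ³/(Dβ)) x³ Φ₃(x,H)`. -/
theorem observer_gain_p1_formula
    (D lam beta : ℝ) (hD : 0 < D) (hlam : 0 < lam) (hbeta : 0 < beta) :
    ∀ c > (0 : ℝ), ∀ eps > (0 : ℝ), ∀ x H : ℝ,
      -D * eps * deriv (fun y => qker D lam x y) H
          - D * iteratedDeriv 2 (fun x' => psiK D lam beta x' H) x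
          - c * psiK D lam beta x H =
        c * lam / beta * x * Phi D lam 1 x H
          + lam ^ 2 * x * (eps * H / D - 3 / beta) * Phi D lam 2 x H
          + lam ^ 3 / (D * beta) * x ^ 3 * Phi D lam 3 x H := by
  intro c hc eps heps x H
  have hq : deriv (fun y => qker D lam x y) H
      = -(lam / D) * x * (lam / D * H * Phi D lam 2 x H) :=
    ((Phi_dy D lam 1 x H).const_mul (-(lam / D) * x)).deriv
  have h1 : deriv (fun x' => psiK D lam beta x' H) = fun x' =>
      D / beta * (-(lam / D) * (Phi D lam 1 x' H - lam / D * (x' ^ 2 * Phi D lam 2 x' H))) := by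
    funext z
    have h := ((((hasDerivAt_id z).const_mul (-(lam / D))).mul (Phi_dx D lam 1 z H)).const_mul
      (D / beta))
    refine (h.congr_deriv ?_).deriv
    simp only [id]
    ring
  have h2 : iteratedDeriv 2 (fun x' => psiK D lam beta x' H) x =
      D / beta * (-(lam / D) * (-(lam / D * x * Phi D lam 2 x H)
        - lam / D * (2 * x * Phi D lam 2 x H
          + x ^ 2 * (-(lam / D * x * Phi D lam 3 x H))))) := by
    rw [iteratedDeriv_succ, iteratedDeriv_one, h1]
    have h := (((Phi_dx D lam 1 x H).sub
      (((hasDerivAt_pow 2 x).mul (Phi_dx D lam 2 x H)).const_mul (lam / D))).const_mul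
        (-(lam / D))).const_mul (D / beta)
    refine (h.congr_deriv ?_).deriv
    norm_num
  rw [hq, h2]
  simp only [psiK, qker]
  field_simp
  ring
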